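/- Let p ∈ (2,∞). There is a constant C = C(p) such that for every Schwartz function G : ℂ → ℂ and every k ∈ ℂ with k ≠ 0, ‖∂̄⁻¹[e_{−k} G]‖_{L^p(ℂ)} ≤ C |k|^{−1} ‖∇G‖_{L^{2p/(p+2)}(ℂ)}. -/

import Mathlib

open MeasureTheory Complex ComplexConjugate Filter Bornology
open scoped ENNReal Topology SchwartzMap

noncomputable section

/-- `e_k(z) = exp(i(conj k · z + k · conj z)/2)`. -/
def ek (k z : ℂ) : ℂ := Complex.exp (Complex.I * (conj k * z + k * conj z) / 2)

/-- The solid Cauchy transform `∂̄⁻¹[h](z) = (1/π) ∫ h(w)/(z-w) dA(w)`. -/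
def dbarInv (h : ℂ → ℂ) (z : ℂ) : ℂ := (Real.pi : ℂ)⁻¹ * ∫ w : ℂ, h w / (z - w)

/-- The solid Cauchy transform `∂_z⁻¹[h](z) = (1/π) ∫ h(w)/(conj z - conj w) dA(w)`. -/
def dzInv (h : ℂ → ℂ) (z : ℂ) : ℂ := (Real.pi : ℂ)⁻¹ * ∫ w : ℂ, h w / (conj z - conj w)

/-- The operator `S^k_q[F] = ∂̄⁻¹[e_{-k} q ∂_z⁻¹[e_k conj(q) F]]`. -/
def Sk (k : ℂ) (q F : ℂ → ℂ) : ℂ → ℂ :=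
  dbarInv fun z => ek (-k) z * q z * dzInv (fun w => ek k w * conj (q w) * F w) z

/-- The Fourier transform on `ℂ ≅ ℝ²`. -/
def FT (f : ℂ → ℂ) (ξ : ℂ) : ℂ :=
  ∫ z : ℂ, Complex.exp (-(2 * Real.pi * Complex.I) * ((z.re * ξ.re + z.im * ξ.im : ℝ) : ℂ)) * f z

/-- The inverse Fourier transform on `ℂ ≅ ℝ²`. -/
def FTinv (f : ℂ → ℂ) (x : ℂ) : ℂ :=
  ∫ ξ : ℂ, Complex.exp ((2 * Real.pi * Complex.I) * ((x.re * ξ.re + x.im * ξ.im : ℝ) : ℂ)) * f ξ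

/-- `D^s`, the Fourier multiplier with symbol `|ξ|^s`. -/
def Ds (s : ℝ) (f : ℂ → ℂ) : ℂ → ℂ :=
  FTinv fun ξ => ((‖ξ‖ ^ s : ℝ) : ℂ) * FT f ξ

/-- The weighted Sobolev norm
`‖q‖_{H^{s,s}} = max {‖q‖₂, ‖D^s q‖₂, ‖|·|^s q‖₂}`, where by Plancherel
`‖D^s q‖₂ = ‖ |ξ|^s (FT q)(ξ) ‖₂`. -/
def HssNorm (s : ℝ) (q : ℂ → ℂ) : ℝ≥0∞ :=
  max (eLpNorm q 2 volume)
    (max (eLpNorm (fun ξ : ℂ => ((‖ξ‖ ^ s : ℝ) : ℂ) * FT q ξ) 2 volume)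
      (eLpNorm (fun z : ℂ => ((‖z‖ ^ s : ℝ) : ℂ) * q z) 2 volume))

/-- The Cauchy–Riemann operator `∂̄ = (∂/∂z₁ + i ∂/∂z₂)/2`. -/
def dbar (G : ℂ → ℂ) (z : ℂ) : ℂ := (fderiv ℝ G z 1 + Complex.I * fderiv ℝ G z Complex.I) / 2

end

/-!
Since `∂̄ (e_k G) = (i k / 2) e_k G + e_k ∂̄G`, applying `∂̄⁻¹` and using the Cauchy–Pompeiu
formula `∂̄⁻¹ ∂̄ F = F` gives `(i k / 2) ∂̄⁻¹[e_k G] = e_k G - ∂̄⁻¹[e_k ∂̄G]`: the oscillation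
gains a factor `|k|⁻¹` at the cost of one derivative. As also `G = ∂̄⁻¹[∂̄G]`, both terms on
the right are pointwise at most a multiple of the Riesz potential of order one of `|∇G|`, and
the Hardy–Littlewood–Sobolev inequality in dimension two maps `L^{2p/(p+2)}` to `L^p`.

The Hardy–Littlewood–Sobolev inequality is obtained by Hedberg's argument. By the layer-cake formula
the Riesz potential of `f` at `x` is a weighted integral over radii of the masses of `f` on balls
around `x`. Small balls are controlled by the maximal function `M f x`, large ones by `‖f‖_q`
through Hölder's inequality, and optimising the splitting radius gives
`I_α f ≤ C (M f)^{q/p} ‖f‖_q^{1 - q/p}`. The strong-type bound for `M` on `L^q` concludes.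

The Cauchy–Pompeiu formula is the fundamental theorem of calculus in polar coordinates: `∂̄F` times
the conjugate of the unit radial vector splits into the radial derivative, whose integral along each
ray is `-F z`, and the angular derivative, whose integral over each circle vanishes.
-/

section LayerCake

open Set

variable {s τ : ℝ}

lemma lintegral_Ioo_zero_rpow (hs : 0 < s) (hτ : 0 ≤ τ) :
    ∫⁻ t in Ioo 0 τ, ENNReal.ofReal (t ^ (s - 1)) = ENNReal.ofReal (τ ^ s / s) := by
  have hint : IntegrableOn (fun t : ℝ => t ^ (s - 1)) (Ioc 0 τ) :=
    (intervalIntegrable_iff_integrableOn_Ioc_of_le hτ).1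
      (intervalIntegral.intervalIntegrable_rpow' (by linarith))
  rw [setLIntegral_congr Ioo_ae_eq_Ioc, ← ofReal_integral_eq_lintegral_ofReal hint
      (ae_restrict_of_forall_mem measurableSet_Ioc fun t ht => Real.rpow_nonneg ht.1.le _),
    ← intervalIntegral.integral_of_le hτ, integral_rpow (.inl (by linarith)), sub_add_cancel,
    Real.zero_rpow hs.ne', sub_zero]

lemma lintegral_Ici_rpow (hs : 0 < s) (hτ : 0 < τ) :
    ∫⁻ t in Ici τ, ENNReal.ofReal (t ^ (-s - 1)) = ENNReal.ofReal (τ ^ (-s) / s) := by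
  rw [setLIntegral_congr Ioi_ae_eq_Ici.symm, ← ofReal_integral_eq_lintegral_ofReal
      (integrableOn_Ioi_rpow_of_lt (by linarith) hτ)
      (ae_restrict_of_forall_mem measurableSet_Ioi fun t ht =>
        Real.rpow_nonneg (hτ.trans ht).le _),
    integral_Ioi_rpow_of_lt (by linarith) hτ, sub_add_cancel, neg_div_neg_eq]

lemma lintegral_Ioi_zero_rpow (hs : 0 < s) :
    ∫⁻ t in Ioi (0 : ℝ), ENNReal.ofReal (t ^ (s - 1)) = ⊤ := by
  refine ENNReal.eq_top_of_forall_nnreal_le fun b => ?_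
  calc (b : ℝ≥0∞) = ENNReal.ofReal (((s * b) ^ s⁻¹) ^ s / s) := by
        rw [Real.rpow_inv_rpow (by positivity) hs.ne', mul_div_cancel_left₀ _ hs.ne',
          ENNReal.ofReal_coe_nnreal]
    _ = ∫⁻ t in Ioo 0 ((s * b) ^ s⁻¹), ENNReal.ofReal (t ^ (s - 1)) :=
        (lintegral_Ioo_zero_rpow hs (by positivity)).symm
    _ ≤ _ := lintegral_mono_set Ioo_subset_Ioi_self

lemma lintegral_Ioi_inter_ofReal_lt_rpow (hs : 0 < s) (a : ℝ≥0∞) :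
    ∫⁻ t in Ioi 0 ∩ {t | ENNReal.ofReal t < a}, ENNReal.ofReal (t ^ (s - 1)) =
      a ^ s / ENNReal.ofReal s := by
  induction a with
  | top => simp [lintegral_Ioi_zero_rpow hs, hs, ENNReal.top_div]
  | coe b =>
    have hset : Ioi 0 ∩ {t | ENNReal.ofReal t < b} = Ioo 0 (b : ℝ) := by
      ext t
      refine and_congr_right fun ht => ?_
      simp only [mem_ofPred_eq, ← ENNReal.ofReal_coe_nnreal,
        ENNReal.ofReal_lt_ofReal_iff_of_nonneg (le_of_lt ht)]
    rw [hset, lintegral_Ioo_zero_rpow hs b.coe_nonneg, ENNReal.ofReal_div_of_pos hs,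
      ← ENNReal.ofReal_rpow_of_nonneg b.coe_nonneg hs.le, ENNReal.ofReal_coe_nnreal]

theorem lintegral_rpow_eq_mul_lintegral_measure_ofReal_lt {X : Type*} [MeasurableSpace X]
    (ν : Measure X) [SFinite ν] {g : X → ℝ≥0∞} (hg : Measurable g) (hs : 0 < s) :
    ∫⁻ x, g x ^ s ∂ν = ENNReal.ofReal s *
      ∫⁻ t in Ioi 0, ENNReal.ofReal (t ^ (s - 1)) * ν {x | ENNReal.ofReal t < g x} := by
  have hlt : MeasurableSet {q : X × ℝ | ENNReal.ofReal q.2 < g q.1} :=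
    measurableSet_lt (by fun_prop) (by fun_prop)
  have hjoint : Measurable (Function.uncurry fun (x : X) (t : ℝ) =>
      {t : ℝ | ENNReal.ofReal t < g x}.indicator (fun t => ENNReal.ofReal (t ^ (s - 1))) t) :=
    Measurable.indicator (f := fun q : X × ℝ => ENNReal.ofReal (q.2 ^ (s - 1))) (by fun_prop) hlt
  calc ∫⁻ x, g x ^ s ∂ν
      = ∫⁻ x, (ENNReal.ofReal s * ∫⁻ t in Ioi 0, {t : ℝ | ENNReal.ofReal t < g x}.indicator
          (fun t => ENNReal.ofReal (t ^ (s - 1))) t) ∂ν := by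
        refine lintegral_congr fun x => ?_
        rw [setLIntegral_indicator (measurableSet_lt (by fun_prop) measurable_const), inter_comm,
          lintegral_Ioi_inter_ofReal_lt_rpow hs,
          ENNReal.mul_div_cancel (ENNReal.ofReal_pos.2 hs).ne' ENNReal.ofReal_ne_top]
    _ = ENNReal.ofReal s * ∫⁻ t in Ioi (0 : ℝ), ∫⁻ x,
          {x | ENNReal.ofReal t < g x}.indicator (fun _ => ENNReal.ofReal (t ^ (s - 1))) x ∂ν := by
        rw [lintegral_const_mul _ hjoint.lintegral_prod_right,
          lintegral_lintegral_swap hjoint.aemeasurable]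
        rfl
    _ = _ := by
        congr 2 with t
        rw [lintegral_indicator_const (measurableSet_lt measurable_const hg)]

end LayerCake

section MaximalFunction

open Metric Module Set

lemma lowerSemicontinuous_measure_ball {X : Type*} [PseudoMetricSpace X] [MeasurableSpace X]
    (ν : Measure X) (r : ℝ) : LowerSemicontinuous fun x => ν (ball x r) := by
  intro x c hc
  have hmono : Monotone fun n : ℕ => ball x (r - 1 / (n + 1)) := fun m n hmn =>
    ball_subset_ball (sub_le_sub_left (Nat.one_div_le_one_div hmn) r)
  have hunion : ball x r = ⋃ n : ℕ, ball x (r - 1 / (n + 1)) := by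
    ext y
    simp only [mem_iUnion, mem_ball]
    refine ⟨fun hy => ?_, fun ⟨n, hn⟩ => hn.trans (sub_lt_self r Nat.one_div_pos_of_nat)⟩
    exact (exists_nat_one_div_lt (sub_pos.2 hy)).imp fun n hn => lt_sub_comm.1 hn
  simp only [hunion, hmono.measure_iUnion] at hc
  obtain ⟨n, hn⟩ := lt_iSup_iff.1 hc
  filter_upwards [ball_mem_nhds x (Nat.one_div_pos_of_nat (n := n))] with y hy
  refine hn.trans_le (measure_mono (ball_subset_ball' ?_))
  linarith [mem_ball'.1 hy]

/-- The centred Hardy–Littlewood maximal function of `f` with respect to `μ`. It takes values in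
`ℝ≥0∞`, so that it makes sense for every nonnegative `f`. -/
noncomputable def hardyLittlewoodMaximal {X : Type*} [PseudoMetricSpace X] [MeasurableSpace X]
    (μ : Measure X) (f : X → ℝ≥0∞) (x : X) : ℝ≥0∞ :=
  ⨆ (r : ℝ) (_ : 0 < r), ⨍⁻ y in ball x r, f y ∂μ

lemma setLAverage_ball_le_hardyLittlewoodMaximal {X : Type*} [PseudoMetricSpace X]
    [MeasurableSpace X] (μ : Measure X) (f : X → ℝ≥0∞) (x : X) {r : ℝ} (hr : 0 < r) :
    ⨍⁻ y in ball x r, f y ∂μ ≤ hardyLittlewoodMaximal μ f x :=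
  le_iSup₂_of_le r hr le_rfl

section Proper

variable {X : Type*} [PseudoMetricSpace X] [ProperSpace X] [MeasurableSpace X]
  (μ : Measure X) [IsFiniteMeasureOnCompacts μ]

lemma setLIntegral_ball_le_hardyLittlewoodMaximal (f : X → ℝ≥0∞) (x : X) {r : ℝ} (hr : 0 < r) :
    ∫⁻ y in ball x r, f y ∂μ ≤ μ (ball x r) * hardyLittlewoodMaximal μ f x := by
  rw [← measure_mul_setLAverage f measure_ball_lt_top.ne]
  gcongr
  exact setLAverage_ball_le_hardyLittlewoodMaximal μ f x hr

lemma hardyLittlewoodMaximal_le_add_const [μ.IsOpenPosMeasure] {f g : X → ℝ≥0∞} {c : ℝ≥0∞}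
    (h : ∀ x, f x ≤ g x + c) (x : X) :
    hardyLittlewoodMaximal μ f x ≤ hardyLittlewoodMaximal μ g x + c := by
  refine iSup₂_le fun r hr => ?_
  calc ⨍⁻ y in ball x r, f y ∂μ
      ≤ ⨍⁻ y in ball x r, (g y + c) ∂μ := lintegral_mono h
    _ = ⨍⁻ y in ball x r, g y ∂μ + c := by
        rw [setLAverage_eq, lintegral_add_right _ measurable_const, ENNReal.add_div,
          ← setLAverage_eq, ← setLAverage_eq,
          setLAverage_const (measure_ball_pos μ x hr).ne' measure_ball_lt_top.ne]
    _ ≤ _ := by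
        gcongr
        exact setLAverage_ball_le_hardyLittlewoodMaximal μ g x hr

end Proper

variable {E : Type*} [NormedAddCommGroup E] [MeasurableSpace E] [BorelSpace E] (μ : Measure E)
  [μ.IsAddHaarMeasure]

lemma lowerSemicontinuous_hardyLittlewoodMaximal (f : E → ℝ≥0∞) :
    LowerSemicontinuous (hardyLittlewoodMaximal μ f) := by
  refine lowerSemicontinuous_biSup fun r hr => ?_
  have havg : (fun x => ⨍⁻ y in ball x r, f y ∂μ) =
      fun x => (μ (ball 0 r))⁻¹ * μ.withDensity f (ball x r) := by
    ext x
    rw [setLAverage_eq, withDensity_apply _ measurableSet_ball, Measure.addHaar_ball_center,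
      ENNReal.div_eq_inv_mul]
  rw [havg]
  exact (ENNReal.continuous_const_mul
    (ENNReal.inv_ne_top.2 (measure_ball_pos μ 0 hr).ne')).comp_lowerSemicontinuous
    (lowerSemicontinuous_measure_ball _ r) fun _ _ h => mul_le_mul_right h _

lemma measurable_hardyLittlewoodMaximal (f : E → ℝ≥0∞) :
    Measurable (hardyLittlewoodMaximal μ f) :=
  (lowerSemicontinuous_hardyLittlewoodMaximal μ f).measurable

variable [NormedSpace ℝ E] [FiniteDimensional ℝ E] [Nontrivial E]

lemma bddAbove_setOf_measure_ball_le {b : ℝ≥0∞} (hb : b ≠ ⊤) :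
    BddAbove {r : ℝ | μ (ball (0 : E) r) ≤ b} := by
  have hunit : μ (ball (0 : E) 1) ≠ 0 := (measure_ball_pos μ 0 one_pos).ne'
  refine ⟨max 1 (b / μ (ball (0 : E) 1)).toReal, fun r hr => ?_⟩
  rcases le_total r 1 with h1 | h1
  · exact le_max_of_le_left h1
  refine le_max_of_le_right ((le_self_pow₀ h1 (finrank_pos (R := ℝ) (M := E)).ne').trans ?_)
  rw [← ENNReal.ofReal_le_iff_le_toReal (ENNReal.div_ne_top hb hunit),
    ENNReal.le_div_iff_mul_le (.inl hunit) (.inl measure_ball_lt_top.ne),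
    ← Measure.addHaar_ball μ 0 (zero_le_one.trans h1)]
  exact hr

theorem exists_pairwiseDisjoint_closedBall_of_lt_hardyLittlewoodMaximal {f : E → ℝ≥0∞}
    (hf : ∫⁻ y, f y ∂μ ≠ ⊤) {t : ℝ≥0∞} (ht : t ≠ 0) (ht' : t ≠ ⊤) :
    ∃ (u : Set E) (r : E → ℝ), u.Countable ∧
      u.PairwiseDisjoint (fun x => closedBall x (r x)) ∧
      (∀ x ∈ u, 0 < r x ∧ t * μ (ball x (r x)) < ∫⁻ y in ball x (r x), f y ∂μ) ∧
      {x | t < hardyLittlewoodMaximal μ f x} ⊆ ⋃ x ∈ u, closedBall x (5 * r x) := by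
  set S := {x | t < hardyLittlewoodMaximal μ f x}
  have hball : ∀ x ∈ S, ∃ r : ℝ, 0 < r ∧ t * μ (ball x r) < ∫⁻ y in ball x r, f y ∂μ := by
    intro x hx
    obtain ⟨r, hr, hlt⟩ : ∃ r : ℝ, 0 < r ∧ t < ⨍⁻ y in ball x r, f y ∂μ := by
      simpa only [S, hardyLittlewoodMaximal, mem_ofPred_eq, lt_iSup_iff, exists_prop] using hx
    rw [setLAverage_eq, ENNReal.lt_div_iff_mul_lt (.inl (measure_ball_pos μ x hr).ne')
      (.inl measure_ball_lt_top.ne)] at hlt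
    exact ⟨r, hr, hlt⟩
  choose! r hr0 hr using hball
  obtain ⟨R, hR⟩ := bddAbove_setOf_measure_ball_le μ (ENNReal.div_ne_top hf ht)
  have hrR : ∀ x ∈ S, r x ≤ R := fun x hx => hR <| by
    rw [mem_ofPred_eq, ← Measure.addHaar_ball_center μ x,
      ENNReal.le_div_iff_mul_le (.inl ht) (.inl ht'), mul_comm]
    exact (hr x hx).le.trans (setLIntegral_le_lintegral _ _)
  obtain ⟨u, huS, hdisj, hcov⟩ :=
    Vitali.exists_disjoint_subfamily_covering_enlargement_closedBall S id r R hrR 5 (by norm_num)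
  refine ⟨u, r, ?_, hdisj, fun x hx => ⟨hr0 x (huS hx), hr x (huS hx)⟩, fun x hx => ?_⟩
  · exact hdisj.countable_of_nonempty_interior fun x hx =>
      ⟨x, ball_subset_interior_closedBall (mem_ball_self (hr0 x (huS hx)))⟩
  · obtain ⟨y, hy, hxy⟩ := hcov x hx
    exact mem_biUnion hy (hxy (mem_closedBall_self (hr0 x hx).le))

theorem mul_measure_lt_hardyLittlewoodMaximal_le (f : E → ℝ≥0∞) (t : ℝ≥0∞) :
    t * μ {x | t < hardyLittlewoodMaximal μ f x} ≤ 5 ^ finrank ℝ E * ∫⁻ y, f y ∂μ := by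
  rcases eq_or_ne t 0 with rfl | ht
  · simp
  rcases eq_or_ne t ⊤ with rfl | ht'
  · simp
  rcases eq_or_ne (∫⁻ y, f y ∂μ) ⊤ with hf | hf
  · simp [hf, ENNReal.mul_top]
  obtain ⟨u, r, hu, hdisj, hr, hcov⟩ :=
    exists_pairwiseDisjoint_closedBall_of_lt_hardyLittlewoodMaximal μ hf ht ht'
  have := hu.to_subtype
  have hdilate (x : E) : μ (closedBall x (5 * r x)) = 5 ^ finrank ℝ E * μ (ball x (r x)) := by
    rw [Measure.addHaar_closedBall_mul_of_pos μ x (by norm_num), ENNReal.ofReal_pow (by norm_num),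
      ENNReal.ofReal_ofNat, Measure.addHaar_closedBall_eq_addHaar_ball,
      Measure.addHaar_ball_center μ x]
  calc t * μ {x | t < hardyLittlewoodMaximal μ f x}
      ≤ t * ∑' x : u, μ (closedBall (x : E) (5 * r x)) := by
        gcongr
        exact (measure_mono hcov).trans (measure_biUnion_le μ hu _)
    _ = 5 ^ finrank ℝ E * ∑' x : u, t * μ (ball (x : E) (r x)) := by
        simp_rw [hdilate, ENNReal.tsum_mul_left]
        ring
    _ ≤ 5 ^ finrank ℝ E * ∑' x : u, ∫⁻ y in closedBall (x : E) (r x), f y ∂μ := by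
        gcongr with x
        exact (hr x x.2).2.le.trans (lintegral_mono_set ball_subset_closedBall)
    _ = 5 ^ finrank ℝ E * ∫⁻ y in ⋃ x ∈ u, closedBall x (r x), f y ∂μ := by
        rw [lintegral_biUnion hu (fun _ _ => measurableSet_closedBall) hdisj]
    _ ≤ 5 ^ finrank ℝ E * ∫⁻ y, f y ∂μ := by
        gcongr
        exact Measure.restrict_le_self

lemma mul_measure_lt_hardyLittlewoodMaximal_le_withDensity {f : E → ℝ≥0∞} (hf : Measurable f)
    (t : ℝ≥0∞) :
    t * μ {x | t < hardyLittlewoodMaximal μ f x} ≤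
      2 * 5 ^ finrank ℝ E * μ.withDensity f {x | t < 2 * f x} := by
  set S := {x | t < 2 * f x}
  have hS : MeasurableSet S := measurableSet_lt measurable_const (hf.const_mul 2)
  have hle : ∀ x, f x ≤ S.indicator f x + t / 2 := by
    intro x
    by_cases hx : x ∈ S
    · simp [hx]
    · rw [indicator_of_notMem hx, zero_add,
        ENNReal.le_div_iff_mul_le (.inl two_ne_zero) (.inl ENNReal.ofNat_ne_top), mul_comm]
      exact not_lt.1 hx
  have hsub : {x | t < hardyLittlewoodMaximal μ f x} ⊆
      {x | t / 2 < hardyLittlewoodMaximal μ (S.indicator f) x} := by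
    intro x hx
    refine lt_of_add_lt_add_right (a := t / 2) ?_
    rw [ENNReal.add_halves]
    exact lt_of_lt_of_le hx (hardyLittlewoodMaximal_le_add_const μ hle x)
  calc t * μ {x | t < hardyLittlewoodMaximal μ f x}
      ≤ 2 * (t / 2 * μ {x | t / 2 < hardyLittlewoodMaximal μ (S.indicator f) x}) := by
        rw [← mul_assoc, ENNReal.mul_div_cancel two_ne_zero ENNReal.ofNat_ne_top]
        gcongr
    _ ≤ 2 * (5 ^ finrank ℝ E * ∫⁻ y, S.indicator f y ∂μ) := by
        gcongr 2 * ?_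
        exact mul_measure_lt_hardyLittlewoodMaximal_le μ _ _
    _ = _ := by rw [lintegral_indicator hS, withDensity_apply _ hS, mul_assoc]

lemma ofReal_rpow_mul_measure_lt_hardyLittlewoodMaximal_le {q : ℝ} {f : E → ℝ≥0∞}
    (hf : Measurable f) {t : ℝ} (ht : 0 < t) :
    ENNReal.ofReal (t ^ (q - 1)) * μ {x | ENNReal.ofReal t < hardyLittlewoodMaximal μ f x} ≤
      2 * 5 ^ finrank ℝ E * (ENNReal.ofReal (t ^ (q - 1 - 1)) *
        μ.withDensity f {x | ENNReal.ofReal t < 2 * f x}) := by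
  rw [← sub_add_cancel (q - 1) 1, Real.rpow_add_one ht.ne', add_sub_cancel_right,
    ENNReal.ofReal_mul (Real.rpow_nonneg ht.le _), mul_assoc, mul_left_comm (2 * 5 ^ _)]
  gcongr ENNReal.ofReal _ * ?_
  exact mul_measure_lt_hardyLittlewoodMaximal_le_withDensity μ hf _

theorem lintegral_hardyLittlewoodMaximal_rpow_le {q : ℝ} (hq : 1 < q) {f : E → ℝ≥0∞}
    (hf : Measurable f) :
    ∫⁻ x, hardyLittlewoodMaximal μ f x ^ q ∂μ ≤
      ENNReal.ofReal (q / (q - 1)) * (2 ^ q * 5 ^ finrank ℝ E) * ∫⁻ x, f x ^ q ∂μ := by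
  have hq0 : 0 < q := one_pos.trans hq
  have hq1 : 0 < q - 1 := sub_pos.2 hq
  have hself (a : ℝ≥0∞) : a * a ^ (q - 1) = a ^ q := by
    conv_rhs => rw [← add_sub_cancel 1 q, ENNReal.rpow_add_of_nonneg _ _ zero_le_one hq1.le,
      ENNReal.rpow_one]
  calc ∫⁻ x, hardyLittlewoodMaximal μ f x ^ q ∂μ
      = ENNReal.ofReal q * ∫⁻ t in Ioi (0 : ℝ), ENNReal.ofReal (t ^ (q - 1)) *
          μ {x | ENNReal.ofReal t < hardyLittlewoodMaximal μ f x} :=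
        lintegral_rpow_eq_mul_lintegral_measure_ofReal_lt μ
          (measurable_hardyLittlewoodMaximal μ f) hq0
    _ ≤ ENNReal.ofReal q * ∫⁻ t in Ioi (0 : ℝ), 2 * 5 ^ finrank ℝ E *
          (ENNReal.ofReal (t ^ (q - 1 - 1)) *
            μ.withDensity f {x | ENNReal.ofReal t < 2 * f x}) := by
        gcongr ENNReal.ofReal q * ?_
        exact setLIntegral_mono' measurableSet_Ioi fun t ht =>
          ofReal_rpow_mul_measure_lt_hardyLittlewoodMaximal_le μ hf ht
    _ = ENNReal.ofReal (q / (q - 1)) * (2 * 5 ^ finrank ℝ E) * (ENNReal.ofReal (q - 1) *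
          ∫⁻ t in Ioi (0 : ℝ), ENNReal.ofReal (t ^ (q - 1 - 1)) *
            μ.withDensity f {x | ENNReal.ofReal t < 2 * f x}) := by
        rw [lintegral_const_mul' _ _ (by finiteness), mul_mul_mul_comm,
          ← ENNReal.ofReal_mul (by positivity), div_mul_cancel₀ _ hq1.ne']
    _ = ENNReal.ofReal (q / (q - 1)) * (2 * 5 ^ finrank ℝ E) *
          ∫⁻ x, (2 * f x) ^ (q - 1) ∂μ.withDensity f := by
        rw [lintegral_rpow_eq_mul_lintegral_measure_ofReal_lt _ (hf.const_mul 2) hq1]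
    _ = ENNReal.ofReal (q / (q - 1)) * (2 * 5 ^ finrank ℝ E) *
          ∫⁻ x, 2 ^ (q - 1) * f x ^ q ∂μ := by
        rw [lintegral_withDensity_eq_lintegral_mul _ hf (by fun_prop)]
        congr 2 with x
        rw [Pi.mul_apply, ENNReal.mul_rpow_of_nonneg _ _ hq1.le, mul_left_comm, hself]
    _ = _ := by
        rw [lintegral_const_mul _ (by fun_prop), ← hself 2]
        ring

end MaximalFunction

section RieszPotential

open scoped NNReal

open Metric Module Set

lemma setLIntegral_le_eLpNorm_mul_measure_rpow {X : Type*} [MeasurableSpace X] (μ : Measure X)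
    {q : ℝ} (hq : 1 ≤ q) {f : X → ℝ≥0∞} (hf : Measurable f) (s : Set X) :
    ∫⁻ y in s, f y ∂μ ≤ eLpNorm f (ENNReal.ofReal q) μ * μ s ^ (1 - q⁻¹) := by
  calc ∫⁻ y in s, f y ∂μ = eLpNorm f 1 (μ.restrict s) := by
        simp only [eLpNorm_one_eq_lintegral_enorm, enorm_eq_self]
    _ ≤ eLpNorm f (ENNReal.ofReal q) (μ.restrict s) * μ s ^ (1 - q⁻¹) := by
        have := eLpNorm_le_eLpNorm_mul_rpow_measure_univ (μ := μ.restrict s)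
          (ENNReal.one_le_ofReal.2 hq) hf.aestronglyMeasurable
        simpa [ENNReal.toReal_ofReal (zero_le_one.trans hq)] using this
    _ ≤ _ := by
        gcongr
        exact Measure.restrict_le_self

lemma eLpNorm_ofReal_rpow_eq_lintegral {X : Type*} [MeasurableSpace X] (μ : Measure X) {p : ℝ}
    (hp : 0 < p) (f : X → ℝ≥0∞) :
    eLpNorm f (ENNReal.ofReal p) μ ^ p = ∫⁻ x, f x ^ p ∂μ := by
  lift p to ℝ≥0 using hp.le
  simpa only [ENNReal.ofReal_coe_nnreal, enorm_eq_self] using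
    eLpNorm_nnreal_pow_eq_lintegral (f := f) (μ := μ) (NNReal.coe_pos.1 hp).ne'

lemma le_mul_rpow_mul_rpow_of_forall_le_add {T A B : ℝ≥0∞} {a b : ℝ} (ha : 0 < a) (hb : 0 < b)
    (hB : B ≠ 0) (hB' : B ≠ ⊤)
    (h : ∀ τ : ℝ, 0 < τ → T ≤ A * ENNReal.ofReal (τ ^ (-a)) + B * ENNReal.ofReal (τ ^ b)) :
    T ≤ 2 * (A ^ (b / (a + b)) * B ^ (a / (a + b))) := by
  rcases eq_or_ne A ⊤ with rfl | hA'
  · rw [ENNReal.top_rpow_of_pos (by positivity), ENNReal.top_mul (by positivity)]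
    simp
  rcases eq_or_ne A 0 with rfl | hA
  · have hlim : Tendsto (fun τ : ℝ => B * ENNReal.ofReal (τ ^ b)) (𝓝 0) (𝓝 0) := by
      have := ENNReal.Tendsto.const_mul (a := B)
        (ENNReal.tendsto_ofReal ((Real.continuous_rpow_const hb.le).tendsto 0)) (.inr hB')
      simpa only [Real.zero_rpow hb.ne', ENNReal.ofReal_zero, mul_zero] using this
    refine (ge_of_tendsto (hlim.mono_left (nhdsWithin_le_nhds (s := Ioi 0))) ?_).trans zero_le
    filter_upwards [self_mem_nhdsWithin] with τ hτ
    simpa using h τ hτ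
  have hτ : 0 < (A / B).toReal := ENNReal.toReal_pos (ENNReal.div_ne_zero.2 ⟨hA, hB'⟩)
    (ENNReal.div_ne_top hA' hB)
  have hpow (c : ℝ) : ENNReal.ofReal (((A / B).toReal ^ (a + b)⁻¹) ^ c) =
      A ^ (c / (a + b)) * B ^ (-(c / (a + b))) := by
    rw [← Real.rpow_mul hτ.le, inv_mul_eq_div, ← ENNReal.ofReal_rpow_of_pos hτ,
      ENNReal.ofReal_toReal (ENNReal.div_ne_top hA' hB), div_eq_mul_inv,
      ENNReal.mul_rpow_of_ne_zero hA (ENNReal.inv_ne_zero.2 hB'), ENNReal.inv_rpow,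
      ENNReal.rpow_neg]
  have hnear : A * A ^ (-a / (a + b)) = A ^ (b / (a + b)) := by
    conv_lhs => rw [← ENNReal.rpow_one A, ← ENNReal.rpow_mul, ← ENNReal.rpow_add _ _ hA hA']
    congr 1
    field_simp
    ring
  have hfar : B * B ^ (-(b / (a + b))) = B ^ (a / (a + b)) := by
    conv_lhs => rw [← ENNReal.rpow_one B, ← ENNReal.rpow_mul, ← ENNReal.rpow_add _ _ hB hB']
    congr 1
    field_simp
    ring
  refine (h _ (Real.rpow_pos_of_pos hτ (a + b)⁻¹)).trans_eq ?_
  rw [hpow, hpow, ← mul_assoc, hnear, mul_left_comm, hfar, neg_div, neg_neg, ← two_mul]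

variable {E : Type*} [NormedAddCommGroup E] [NormedSpace ℝ E] [MeasurableSpace E]

/-- The Riesz potential `x ↦ ∫ f(y) ‖x - y‖ ^ (α - d) dμ(y)` of order `α` of a nonnegative function
`f` on a space of dimension `d`, without the customary normalising constant. For `α < d` the kernel
takes the value `⊤` on the diagonal. -/
noncomputable def rieszPotential (μ : Measure E) (α : ℝ) (f : E → ℝ≥0∞) (x : E) : ℝ≥0∞ :=
  ∫⁻ y, f y * ‖x - y‖ₑ ^ (α - finrank ℝ E) ∂μ

variable [FiniteDimensional ℝ E] [BorelSpace E] (μ : Measure E) [μ.IsAddHaarMeasure] {α : ℝ}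
  {f : E → ℝ≥0∞}

lemma measurable_rieszPotential (hf : Measurable f) : Measurable (rieszPotential μ α f) := by
  refine Measurable.lintegral_prod_right'
    (f := fun q : E × E => f q.2 * ‖q.1 - q.2‖ₑ ^ (α - finrank ℝ E)) ?_
  fun_prop

lemma rieszPotential_eq_mul_lintegral_ball (hα : α < finrank ℝ E) (hf : Measurable f) (x : E) :
    rieszPotential μ α f x = ENNReal.ofReal (finrank ℝ E - α) * ∫⁻ t in Ioi (0 : ℝ),
      ENNReal.ofReal (t ^ (finrank ℝ E - α - 1)) * ∫⁻ y in ball x t⁻¹, f y ∂μ := by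
  have hset : ∀ t ∈ Ioi (0 : ℝ), {y | ENNReal.ofReal t < ‖x - y‖ₑ⁻¹} = ball x t⁻¹ := by
    intro t ht
    ext y
    rw [mem_ofPred_eq, mem_ball', dist_eq_norm, ENNReal.lt_inv_iff_lt_inv,
      ← ENNReal.ofReal_inv_of_pos ht, ← ofReal_norm, ENNReal.ofReal_lt_ofReal_iff (inv_pos.2 ht)]
  calc rieszPotential μ α f x
      = ∫⁻ y, ‖x - y‖ₑ⁻¹ ^ (finrank ℝ E - α) ∂μ.withDensity f := by
        rw [lintegral_withDensity_eq_lintegral_mul _ hf (by fun_prop)]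
        refine lintegral_congr fun y => ?_
        rw [Pi.mul_apply, ENNReal.inv_rpow, ← ENNReal.rpow_neg, neg_sub]
    _ = ENNReal.ofReal (finrank ℝ E - α) * ∫⁻ t in Ioi (0 : ℝ),
          ENNReal.ofReal (t ^ (finrank ℝ E - α - 1)) *
            μ.withDensity f {y | ENNReal.ofReal t < ‖x - y‖ₑ⁻¹} :=
        lintegral_rpow_eq_mul_lintegral_measure_ofReal_lt _ (by fun_prop) (sub_pos.2 hα)
    _ = _ := by
        congr 1
        refine setLIntegral_congr_fun measurableSet_Ioi fun t ht => ?_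
        simp only [hset t ht, withDensity_apply f measurableSet_ball]

lemma ofReal_rpow_mul_measure_ball_inv_rpow {t c : ℝ} (ht : 0 < t) (hc : 0 ≤ c) (s : ℝ) (x : E) :
    ENNReal.ofReal (t ^ s) * μ (ball x t⁻¹) ^ c =
      μ (ball 0 1) ^ c * ENNReal.ofReal (t ^ (s - finrank ℝ E * c)) := by
  rw [Measure.addHaar_ball_of_pos μ x (inv_pos.2 ht), ENNReal.mul_rpow_of_nonneg _ _ hc,
    ENNReal.ofReal_rpow_of_pos (by positivity), ← mul_assoc, ← ENNReal.ofReal_mul (by positivity),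
    mul_comm, ← Real.rpow_natCast, Real.inv_rpow ht.le, ← Real.rpow_neg ht.le,
    ← Real.rpow_mul ht.le, ← Real.rpow_add ht, neg_mul, ← sub_eq_add_neg]

lemma setLIntegral_Ici_ball_inv_le_hardyLittlewoodMaximal (hα : 0 < α) {τ : ℝ} (hτ : 0 < τ)
    (f : E → ℝ≥0∞) (x : E) :
    ∫⁻ t in Ici τ, ENNReal.ofReal (t ^ (finrank ℝ E - α - 1)) * ∫⁻ y in ball x t⁻¹, f y ∂μ ≤
      hardyLittlewoodMaximal μ f x * μ (ball 0 1) * ENNReal.ofReal (τ ^ (-α) / α) := by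
  rw [← lintegral_Ici_rpow hα hτ, ← lintegral_const_mul _ (by fun_prop)]
  refine setLIntegral_mono' measurableSet_Ici fun t ht => ?_
  have ht0 : 0 < t := hτ.trans_le ht
  calc _ ≤ ENNReal.ofReal (t ^ (finrank ℝ E - α - 1)) *
        (μ (ball x t⁻¹) * hardyLittlewoodMaximal μ f x) := by
        gcongr
        exact setLIntegral_ball_le_hardyLittlewoodMaximal μ f x (inv_pos.2 ht0)
    _ = _ := by
        have hscale := ofReal_rpow_mul_measure_ball_inv_rpow μ ht0 zero_le_one
          (finrank ℝ E - α - 1) x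
        rw [ENNReal.rpow_one, ENNReal.rpow_one] at hscale
        rw [← mul_assoc, hscale, mul_comm, mul_assoc]
        congr 4
        ring

variable {q : ℝ}

lemma setLIntegral_Ioo_ball_inv_le_eLpNorm (hq : 1 ≤ q) (hαq : α < finrank ℝ E / q) {τ : ℝ}
    (hτ : 0 ≤ τ) (hf : Measurable f) (x : E) :
    ∫⁻ t in Ioo 0 τ, ENNReal.ofReal (t ^ (finrank ℝ E - α - 1)) * ∫⁻ y in ball x t⁻¹, f y ∂μ ≤
      eLpNorm f (ENNReal.ofReal q) μ * μ (ball 0 1) ^ (1 - q⁻¹) *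
        ENNReal.ofReal (τ ^ (finrank ℝ E / q - α) / (finrank ℝ E / q - α)) := by
  rw [← lintegral_Ioo_zero_rpow (sub_pos.2 hαq) hτ, ← lintegral_const_mul _ (by fun_prop)]
  refine setLIntegral_mono' measurableSet_Ioo fun t ht => ?_
  calc _ ≤ ENNReal.ofReal (t ^ (finrank ℝ E - α - 1)) *
        (eLpNorm f (ENNReal.ofReal q) μ * μ (ball x t⁻¹) ^ (1 - q⁻¹)) := by
        gcongr
        exact setLIntegral_le_eLpNorm_mul_measure_rpow μ hq hf _
    _ = _ := by
        rw [mul_left_comm, ofReal_rpow_mul_measure_ball_inv_rpow μ ht.1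
          (sub_nonneg.2 (inv_le_one_of_one_le₀ hq)), ← mul_assoc]
        congr 3
        ring

theorem exists_rieszPotential_le_hardyLittlewoodMaximal_add_eLpNorm (hα : 0 < α) (hq : 1 ≤ q)
    (hαq : α < finrank ℝ E / q) :
    ∃ A B : ℝ≥0, B ≠ 0 ∧ ∀ f : E → ℝ≥0∞, Measurable f → ∀ x, ∀ τ : ℝ, 0 < τ →
      rieszPotential μ α f x ≤
        A * hardyLittlewoodMaximal μ f x * ENNReal.ofReal (τ ^ (-α)) +
          B * eLpNorm f (ENNReal.ofReal q) μ * ENNReal.ofReal (τ ^ (finrank ℝ E / q - α)) := by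
  have hαd : α < finrank ℝ E := hαq.trans_le (div_le_self (Nat.cast_nonneg _) hq)
  have hv' : μ (ball (0 : E) 1) ≠ ⊤ := measure_ball_lt_top.ne
  lift μ (ball (0 : E) 1) to ℝ≥0 using hv' with v hv
  have hv0 : v ≠ 0 := by
    rw [← ENNReal.coe_ne_zero, hv]
    exact (measure_ball_pos μ 0 one_pos).ne'
  refine ⟨(finrank ℝ E - α).toNNReal * v * α⁻¹.toNNReal,
    (finrank ℝ E - α).toNNReal * v ^ (1 - q⁻¹) * (finrank ℝ E / q - α)⁻¹.toNNReal, ?_,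
    fun f hf x τ hτ => ?_⟩
  · positivity
  have hdisj : Disjoint (Ioo 0 τ) (Ici τ) :=
    (Iio_disjoint_Ici le_rfl).mono_left Ioo_subset_Iio_self
  have hnear := setLIntegral_Ici_ball_inv_le_hardyLittlewoodMaximal μ hα hτ f x
  have hfar := setLIntegral_Ioo_ball_inv_le_eLpNorm μ hq hαq hτ.le hf x
  rw [rieszPotential_eq_mul_lintegral_ball μ hαd hf, ← Ioo_union_Ici_eq_Ioi hτ,
    lintegral_union measurableSet_Ici hdisj, add_comm]
  refine (mul_le_mul_right (add_le_add hnear hfar) _).trans_eq ?_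
  rw [← hv, div_eq_mul_inv _ α, div_eq_mul_inv (τ ^ _) (_ - α), ENNReal.ofReal_mul (by positivity),
    ENNReal.ofReal_mul (by positivity),
    ← ENNReal.coe_rpow_of_nonneg _ (sub_nonneg.2 (inv_le_one_of_one_le₀ hq))]
  simp only [ENNReal.ofReal, ENNReal.coe_mul]
  ring

lemma rieszPotential_ne_top (hα : 0 < α) (hαd : α < finrank ℝ E) (hf : Measurable f) {c : ℝ≥0∞}
    (hc : c ≠ ⊤) (hfc : ∀ y, f y ≤ c) (hint : ∫⁻ y, f y ∂μ ≠ ⊤) (x : E) :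
    rieszPotential μ α f x ≠ ⊤ := by
  obtain ⟨A, B, -, hAB⟩ := exists_rieszPotential_le_hardyLittlewoodMaximal_add_eLpNorm μ (q := 1)
    hα le_rfl (by rwa [div_one])
  have hM : hardyLittlewoodMaximal μ f x ≠ ⊤ := ne_top_of_le_ne_top hc <|
    iSup₂_le fun r hr => (lintegral_mono hfc).trans_eq <|
      setLAverage_const (measure_ball_pos μ x hr).ne' measure_ball_lt_top.ne c
  have hN : eLpNorm f (ENNReal.ofReal 1) μ ≠ ⊤ := by
    rwa [ENNReal.ofReal_one, eLpNorm_one_eq_lintegral_enorm]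
  exact ne_top_of_le_ne_top (by finiteness) (hAB f hf x 1 one_pos)

variable [Nontrivial E] {p : ℝ}

theorem exists_rieszPotential_le_hardyLittlewoodMaximal_rpow (hα : 0 < α) (hp : 0 < p)
    (hq : 1 ≤ q) (hpq : p⁻¹ = q⁻¹ - α / finrank ℝ E) :
    ∃ C : ℝ≥0, ∀ f : E → ℝ≥0∞, Measurable f → eLpNorm f (ENNReal.ofReal q) μ ≠ 0 →
      eLpNorm f (ENNReal.ofReal q) μ ≠ ⊤ → ∀ x, rieszPotential μ α f x ≤
        C * (hardyLittlewoodMaximal μ f x ^ (q / p) *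
          eLpNorm f (ENNReal.ofReal q) μ ^ (1 - q / p)) := by
  have hd : (0 : ℝ) < finrank ℝ E := Nat.cast_pos.2 finrank_pos
  set b : ℝ := finrank ℝ E / q - α
  have hb : b = finrank ℝ E / p := by
    rw [div_eq_mul_inv _ p, hpq]
    simp only [b]
    field_simp
  have hb0 : 0 < b := hb ▸ div_pos hd hp
  have hnear : b / (α + b) = q / p := by
    rw [show α + b = finrank ℝ E / q by ring, hb]
    field_simp
  have hfar : α / (α + b) = 1 - q / p := by
    rw [← hnear]
    field_simp
    ring
  have hθ : 0 ≤ q / p := by positivity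
  have hθ' : 0 ≤ 1 - q / p := hfar ▸ by positivity
  obtain ⟨A, B, hB, hAB⟩ :=
    exists_rieszPotential_le_hardyLittlewoodMaximal_add_eLpNorm μ hα hq (sub_pos.1 hb0)
  refine ⟨2 * (A ^ (q / p) * B ^ (1 - q / p)), fun f hf hN hN' x => ?_⟩
  refine (le_mul_rpow_mul_rpow_of_forall_le_add hα hb0
    (mul_ne_zero (ENNReal.coe_ne_zero.2 hB) hN) (by finiteness) (hAB f hf x)).trans_eq ?_
  rw [hnear, hfar, ENNReal.mul_rpow_of_nonneg _ _ hθ, ENNReal.mul_rpow_of_nonneg _ _ hθ',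
    ← ENNReal.coe_rpow_of_nonneg _ hθ, ← ENNReal.coe_rpow_of_nonneg _ hθ', ENNReal.coe_mul,
    ENNReal.coe_mul, ENNReal.coe_ofNat]
  ring

theorem exists_eLpNorm_rieszPotential_le (hα : 0 < α) (hp : 0 < p)
    (hq : 1 < q) (hpq : p⁻¹ = q⁻¹ - α / finrank ℝ E) :
    ∃ C : ℝ≥0, 0 < C ∧ ∀ f : E → ℝ≥0∞, Measurable f →
      eLpNorm (rieszPotential μ α f) (ENNReal.ofReal p) μ ≤
        C * eLpNorm f (ENNReal.ofReal q) μ := by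
  have hq0 : 0 < q := one_pos.trans hq
  obtain ⟨H, hH⟩ := exists_rieszPotential_le_hardyLittlewoodMaximal_rpow μ hα hp hq.le hpq
  set K : ℝ≥0∞ := ENNReal.ofReal (q / (q - 1)) * (2 ^ q * 5 ^ finrank ℝ E)
  have hK : K ≠ ⊤ := by finiteness
  refine ⟨H * K.toNNReal ^ p⁻¹ + 1, by positivity, fun f hf => ?_⟩
  set N := eLpNorm f (ENNReal.ofReal q) μ with hN
  rcases eq_or_ne N 0 with hN0 | hN0
  · have hf0 : f =ᵐ[μ] 0 :=
      (eLpNorm_eq_zero_iff hf.aestronglyMeasurable (ENNReal.ofReal_pos.2 hq0).ne').1 hN0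
    have hI0 : rieszPotential μ α f = 0 := funext fun x =>
      (lintegral_congr_ae (hf0.mono fun y hy => by simp [hy])).trans lintegral_zero
    simp [hI0]
  rcases eq_or_ne N ⊤ with hN' | hN'
  · simp [hN']
  rw [← ENNReal.rpow_le_rpow_iff hp]
  calc eLpNorm (rieszPotential μ α f) (ENNReal.ofReal p) μ ^ p
      = ∫⁻ x, rieszPotential μ α f x ^ p ∂μ := eLpNorm_ofReal_rpow_eq_lintegral _ hp _
    _ ≤ ∫⁻ x, (H * (hardyLittlewoodMaximal μ f x ^ (q / p) * N ^ (1 - q / p))) ^ p ∂μ := by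
        gcongr with x
        exact hH f hf hN0 hN' x
    _ = H ^ p * N ^ (p - q) * ∫⁻ x, hardyLittlewoodMaximal μ f x ^ q ∂μ := by
        rw [← lintegral_const_mul _ ((measurable_hardyLittlewoodMaximal μ f).pow_const q)]
        refine lintegral_congr fun x => ?_
        rw [ENNReal.mul_rpow_of_nonneg _ _ hp.le, ENNReal.mul_rpow_of_nonneg _ _ hp.le,
          ← ENNReal.rpow_mul, ← ENNReal.rpow_mul, sub_mul, div_mul_cancel₀ _ hp.ne', one_mul]
        ring
    _ ≤ H ^ p * N ^ (p - q) * (K * N ^ q) := by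
        gcongr
        rw [hN, eLpNorm_ofReal_rpow_eq_lintegral _ hq0]
        exact lintegral_hardyLittlewoodMaximal_rpow_le μ hq hf
    _ = (H * K ^ p⁻¹ * N) ^ p := by
        rw [ENNReal.mul_rpow_of_nonneg _ _ hp.le, ENNReal.mul_rpow_of_nonneg _ _ hp.le,
          ENNReal.rpow_inv_rpow hp.ne', ← sub_add_cancel p q, ENNReal.rpow_add _ _ hN0 hN',
          sub_add_cancel]
        ring
    _ ≤ _ := by
        gcongr
        rw [ENNReal.coe_add, ENNReal.coe_mul, ENNReal.coe_rpow_of_nonneg _ (by positivity),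
          ENNReal.coe_toNNReal hK]
        exact le_self_add

end RieszPotential

section CauchyPompeiu

open Set Module

lemma rieszPotential_one_eq_lintegral (f : ℂ → ℝ≥0∞) (z : ℂ) :
    rieszPotential volume 1 f z = ∫⁻ w, f w * ‖z - w‖ₑ⁻¹ := by
  rw [rieszPotential, finrank_real_complex]
  norm_num [ENNReal.rpow_neg_one]

lemma circleMap_eq_add_polarCoord_symm (z : ℂ) (q : ℝ × ℝ) :
    circleMap z q.1 q.2 = z + Complex.polarCoord.symm q := by
  rw [circleMap, exp_mul_I, Complex.polarCoord_symm_apply, ofReal_cos, ofReal_sin]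

lemma circleMap_eq_add_mul (z : ℂ) (r θ : ℝ) : circleMap z r θ = z + r * circleMap 0 1 θ := by
  simp [circleMap]

lemma lintegral_polarCoord_target_circleMap (f : ℂ → ℝ≥0∞) (z : ℂ) :
    ∫⁻ q in polarCoord.target, f (circleMap z q.1 q.2) = rieszPotential volume 1 f z := by
  calc ∫⁻ q in polarCoord.target, f (circleMap z q.1 q.2)
      = ∫⁻ q in polarCoord.target, ENNReal.ofReal q.1 •
          (f (z + Complex.polarCoord.symm q) * ‖Complex.polarCoord.symm q‖ₑ⁻¹) := by
        refine setLIntegral_congr_fun polarCoord.open_target.measurableSet fun q hq => ?_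
        have hq0 : 0 < q.1 := hq.1
        have hnorm : ‖Complex.polarCoord.symm q‖ₑ = ENNReal.ofReal q.1 := by
          rw [← ofReal_norm, Complex.norm_polarCoord_symm, abs_of_pos hq0]
        rw [hnorm, circleMap_eq_add_polarCoord_symm, smul_eq_mul, mul_left_comm,
          ENNReal.mul_inv_cancel (ENNReal.ofReal_pos.2 hq0).ne' ENNReal.ofReal_ne_top, mul_one]
    _ = ∫⁻ u, f (z + u) * ‖u‖ₑ⁻¹ :=
        Complex.lintegral_comp_polarCoord_symm fun u => f (z + u) * ‖u‖ₑ⁻¹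
    _ = ∫⁻ w, f w * ‖z - w‖ₑ⁻¹ := by
        rw [← lintegral_add_left_eq_self (fun w => f w * ‖z - w‖ₑ⁻¹) z]
        simp only [sub_add_cancel_left, enorm_neg]
    _ = _ := (rieszPotential_one_eq_lintegral f z).symm

lemma dbarInv_eq_integral_polarCoord_target (h : ℂ → ℂ) (z : ℂ) :
    dbarInv h z = -((Real.pi : ℂ)⁻¹ * ∫ q in polarCoord.target,
      h (circleMap z q.1 q.2) * conj (circleMap 0 1 q.2)) := by
  rw [dbarInv, ← integral_add_left_eq_self _ z, ← Complex.integral_comp_polarCoord_symm,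
    ← mul_neg, ← integral_neg]
  congr 1
  refine setIntegral_congr_fun polarCoord.open_target.measurableSet fun q hq => ?_
  have hq0 : (q.1 : ℂ) ≠ 0 := ofReal_ne_zero.2 hq.1.ne'
  have hinv : (circleMap 0 1 q.2)⁻¹ = conj (circleMap 0 1 q.2) := inv_eq_conj (by simp)
  have hpolar : Complex.polarCoord.symm q = q.1 * circleMap 0 1 q.2 := by
    rw [← zero_add (Complex.polarCoord.symm q), ← circleMap_eq_add_polarCoord_symm,
      circleMap_eq_add_mul, zero_add]
  rw [circleMap_eq_add_polarCoord_symm, sub_add_cancel_left, hpolar, ← hinv, real_smul, div_neg,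
    div_eq_mul_inv, mul_inv]
  field_simp

lemma dbar_mul_conj (F : ℂ → ℂ) (z v : ℂ) :
    dbar F z * conj v = (fderiv ℝ F z v + I * fderiv ℝ F z (v * I)) / 2 := by
  have hv (w : ℂ) : fderiv ℝ F z w = w.re * fderiv ℝ F z 1 + w.im * fderiv ℝ F z I := by
    have hw : w = w.re • 1 + w.im • I := by simp
    conv_lhs => rw [hw, map_add, map_smul, map_smul, real_smul, real_smul]
  have hconj : conj v = v.re - v.im * I := by
    apply Complex.ext <;> simp
  rw [dbar, hv v, hv (v * I), hconj, mul_I_re, mul_I_im, ofReal_neg]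
  linear_combination -(v.im / 2) * fderiv ℝ F z I * I_mul_I

variable {F : ℂ → ℂ} {z : ℂ}

lemma integrableOn_polarCoord_target_of_norm_le {H : Type*} [NormedAddCommGroup H] {f : ℂ → H}
    {g : ℝ × ℝ → ℂ} (hg : Continuous g) (hgf : ∀ q, ‖g q‖ ≤ ‖f (circleMap z q.1 q.2)‖)
    (hf : rieszPotential volume 1 (‖f ·‖ₑ) z ≠ ⊤) : IntegrableOn g polarCoord.target := by
  refine ⟨hg.aestronglyMeasurable, lt_of_le_of_lt ?_ hf.lt_top⟩
  rw [← lintegral_polarCoord_target_circleMap]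
  exact lintegral_mono fun q => enorm_le_iff_norm_le.2 (hgf q)

lemma integral_Ioi_fderiv_circleMap (hF : ContDiff ℝ 1 F) (θ : ℝ)
    (hint : IntegrableOn (fun r => F (circleMap z r θ)) (Ioi 0))
    (hint' : IntegrableOn (fun r => fderiv ℝ F (circleMap z r θ) (circleMap 0 1 θ)) (Ioi 0)) :
    ∫ r in Ioi (0 : ℝ), fderiv ℝ F (circleMap z r θ) (circleMap 0 1 θ) = -F z := by
  have hderiv (r : ℝ) : HasDerivAt (fun r => F (circleMap z r θ))
      (fderiv ℝ F (circleMap z r θ) (circleMap 0 1 θ)) r := by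
    refine (hF.differentiable one_ne_zero _).hasFDerivAt.comp_hasDerivAt r ?_
    simp only [circleMap_eq_add_mul z _ θ]
    simpa using ((hasDerivAt_id r).ofReal_comp.mul_const (circleMap 0 1 θ)).const_add z
  have hlim : Tendsto (fun r => F (circleMap z r θ)) atTop (𝓝 0) :=
    tendsto_zero_of_hasDerivAt_of_integrableOn_Ioi (fun r _ => hderiv r) hint' hint
  rw [integral_Ioi_of_hasDerivAt_of_tendsto' (fun r _ => hderiv r) hint' hlim, zero_sub]
  simp

lemma integral_Ioo_fderiv_circleMap (hF : ContDiff ℝ 1 F) (z : ℂ) {r : ℝ} (hr : r ≠ 0) :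
    ∫ θ in Ioo (-Real.pi) Real.pi, fderiv ℝ F (circleMap z r θ) (circleMap 0 1 θ * I) = 0 := by
  have hderiv (θ : ℝ) : HasDerivAt (fun θ => F (circleMap z r θ))
      (r • fderiv ℝ F (circleMap z r θ) (circleMap 0 1 θ * I)) θ := by
    rw [← map_smul, real_smul, ← mul_assoc]
    have hcomp :=
      (hF.differentiable one_ne_zero _).hasFDerivAt.comp_hasDerivAt θ (hasDerivAt_circleMap z r θ)
    rwa [circleMap_eq_add_mul 0, zero_add] at hcomp
  have hperiod : ∫ θ in -Real.pi..Real.pi,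
      r • fderiv ℝ F (circleMap z r θ) (circleMap 0 1 θ * I) = 0 := by
    rw [intervalIntegral.integral_eq_sub_of_hasDerivAt (fun θ _ => hderiv θ)
      (Continuous.intervalIntegrable (by fun_prop) _ _), sub_eq_zero]
    simpa [two_mul] using congrArg F (periodic_circleMap z r (-Real.pi))
  rw [intervalIntegral.integral_smul, smul_eq_zero, or_iff_right hr,
    intervalIntegral.integral_of_le (by linarith [Real.pi_pos])] at hperiod
  rwa [setIntegral_congr_set Ioo_ae_eq_Ioc]

lemma volume_restrict_polarCoord_target : (volume : Measure (ℝ × ℝ)).restrict polarCoord.target =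
    (volume.restrict (Ioi 0)).prod (volume.restrict (Ioo (-Real.pi) Real.pi)) := by
  rw [polarCoord_target, Measure.volume_eq_prod, Measure.prod_restrict]

lemma integral_polarCoord_target_fderiv_radial (hF : ContDiff ℝ 1 F)
    (hint : IntegrableOn (fun q : ℝ × ℝ => F (circleMap z q.1 q.2)) polarCoord.target)
    (hint' : IntegrableOn (fun q : ℝ × ℝ => fderiv ℝ F (circleMap z q.1 q.2) (circleMap 0 1 q.2))
      polarCoord.target) :
    ∫ q in polarCoord.target, fderiv ℝ F (circleMap z q.1 q.2) (circleMap 0 1 q.2) =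
      -(2 * Real.pi * F z) := by
  rw [IntegrableOn, volume_restrict_polarCoord_target] at hint hint'
  have hrays : ∀ᵐ θ ∂volume.restrict (Ioo (-Real.pi) Real.pi), ∫ r in Ioi (0 : ℝ),
      fderiv ℝ F (circleMap z r θ) (circleMap 0 1 θ) = -F z := by
    filter_upwards [hint.prod_left_ae, hint'.prod_left_ae] with θ hθ hθ'
    exact integral_Ioi_fderiv_circleMap hF θ hθ hθ'
  have hpi : -Real.pi ≤ Real.pi := by linarith [Real.pi_pos]
  rw [volume_restrict_polarCoord_target, integral_prod_symm _ hint', integral_congr_ae hrays,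
    setIntegral_const, Real.volume_real_Ioo_of_le hpi, real_smul]
  push_cast
  ring

lemma integral_polarCoord_target_fderiv_angular (hF : ContDiff ℝ 1 F)
    (hint : IntegrableOn
      (fun q : ℝ × ℝ => fderiv ℝ F (circleMap z q.1 q.2) (circleMap 0 1 q.2 * I))
      polarCoord.target) :
    ∫ q in polarCoord.target, fderiv ℝ F (circleMap z q.1 q.2) (circleMap 0 1 q.2 * I) = 0 := by
  rw [IntegrableOn, volume_restrict_polarCoord_target] at hint
  rw [volume_restrict_polarCoord_target, integral_prod _ hint,
    setIntegral_congr_fun measurableSet_Ioi fun r hr =>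
      integral_Ioo_fderiv_circleMap hF z (ne_of_gt hr), integral_zero]

theorem dbarInv_dbar (hF : ContDiff ℝ 1 F) (hint : rieszPotential volume 1 (‖F ·‖ₑ) z ≠ ⊤)
    (hint' : rieszPotential volume 1 (‖fderiv ℝ F ·‖ₑ) z ≠ ⊤) : dbarInv (dbar F) z = F z := by
  have hFint : IntegrableOn (fun q : ℝ × ℝ => F (circleMap z q.1 q.2)) polarCoord.target :=
    integrableOn_polarCoord_target_of_norm_le (by fun_prop) (fun _ => le_rfl) hint
  have hradial : IntegrableOn
      (fun q : ℝ × ℝ => fderiv ℝ F (circleMap z q.1 q.2) (circleMap 0 1 q.2)) polarCoord.target :=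
    integrableOn_polarCoord_target_of_norm_le (by fun_prop)
      (fun q => ContinuousLinearMap.unit_le_opNorm _ _ (by simp)) hint'
  have hangular : IntegrableOn
      (fun q : ℝ × ℝ => fderiv ℝ F (circleMap z q.1 q.2) (circleMap 0 1 q.2 * I))
      polarCoord.target :=
    integrableOn_polarCoord_target_of_norm_le (by fun_prop)
      (fun q => ContinuousLinearMap.unit_le_opNorm _ _ (by simp)) hint'
  have hpi : (Real.pi : ℂ) ≠ 0 := ofReal_ne_zero.2 Real.pi_ne_zero
  rw [dbarInv_eq_integral_polarCoord_target]
  simp only [dbar_mul_conj]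
  rw [integral_div, integral_add hradial (hangular.const_mul I), integral_const_mul,
    integral_polarCoord_target_fderiv_radial hF hFint hradial,
    integral_polarCoord_target_fderiv_angular hF hangular]
  field_simp
  ring

end CauchyPompeiu

section CauchyTransform

variable {h : ℂ → ℂ}

lemma lintegral_enorm_div_sub (h : ℂ → ℂ) (z : ℂ) :
    ∫⁻ w, ‖h w / (z - w)‖ₑ = rieszPotential volume 1 (‖h ·‖ₑ) z := by
  rw [rieszPotential_one_eq_lintegral]
  refine lintegral_congr_ae ?_
  filter_upwards [Measure.ae_ne volume z] with w hw
  rw [div_eq_mul_inv, enorm_mul, enorm_inv (sub_ne_zero.2 hw.symm)]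

lemma integrable_div_sub_iff (hh : Measurable h) (z : ℂ) :
    Integrable (fun w => h w / (z - w)) ↔ rieszPotential volume 1 (‖h ·‖ₑ) z ≠ ⊤ := by
  have hm : AEStronglyMeasurable (fun w => h w / (z - w)) :=
    (hh.div (measurable_const.sub measurable_id)).aestronglyMeasurable
  rw [Integrable, and_iff_right hm, HasFiniteIntegral, lintegral_enorm_div_sub, lt_top_iff_ne_top]

lemma integrable_div_sub_of_norm_le (hh : Measurable h) {c : ℝ} (hc : ∀ w, ‖h w‖ ≤ c)
    (hint : Integrable h) (z : ℂ) : Integrable fun w => h w / (z - w) := by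
  have hc' (w : ℂ) : ‖h w‖ₑ ≤ ENNReal.ofReal c := by
    rw [← ofReal_norm]
    exact ENNReal.ofReal_le_ofReal (hc w)
  exact (integrable_div_sub_iff hh z).2 (rieszPotential_ne_top volume one_pos (by simp) hh.enorm
    ENNReal.ofReal_ne_top hc' hint.hasFiniteIntegral.ne z)

lemma enorm_dbarInv_le {f : ℂ → ℝ≥0∞} (hf : ∀ w, ‖h w‖ₑ ≤ f w) (z : ℂ) :
    ‖dbarInv h z‖ₑ ≤ ENNReal.ofReal Real.pi⁻¹ * rieszPotential volume 1 f z := by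
  have hpi : ‖(Real.pi : ℂ)⁻¹‖ₑ = ENNReal.ofReal Real.pi⁻¹ := by
    rw [← ofReal_norm, norm_inv, norm_real, Real.norm_of_nonneg Real.pi_pos.le]
  rw [dbarInv, enorm_mul, hpi]
  gcongr
  refine (enorm_integral_le_lintegral_enorm _).trans ?_
  rw [lintegral_enorm_div_sub]
  exact lintegral_mono fun w => by gcongr; exact hf w

end CauchyTransform

section PlaneWave

variable {G : ℂ → ℂ} {z : ℂ}

lemma norm_ek (k z : ℂ) : ‖ek k z‖ = 1 := by
  have hphase : I * (conj k * z + k * conj z) / 2 =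
      ((k.re * z.re + k.im * z.im : ℝ) : ℂ) * I := by
    apply Complex.ext
    · simp
      ring
    · simp
  rw [ek, hphase, norm_exp_ofReal_mul_I]

lemma enorm_ek_mul (k z c : ℂ) : ‖ek k z * c‖ₑ = ‖c‖ₑ := by
  rw [enorm_eq_iff_norm_eq, norm_mul, norm_ek, one_mul]

lemma contDiff_ek (k : ℂ) : ContDiff ℝ 1 (ek k) := by
  have hconj : ContDiff ℝ 1 fun z : ℂ => conj z := conjCLE.contDiff
  unfold ek
  fun_prop

lemma fderiv_ek_apply (k z v : ℂ) :
    fderiv ℝ (ek k) z v = ek k z * (I / 2 * (conj k * v + k * conj v)) := by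
  have hphase : HasFDerivAt (fun z : ℂ => I * (conj k * z + k * conj z) / 2)
      ((I / 2) • (conj k • ContinuousLinearMap.id ℝ ℂ + k • (conjCLE : ℂ →L[ℝ] ℂ))) z := by
    have hsum := (((hasFDerivAt_id (𝕜 := ℝ) z).const_smul (conj k)).add
      ((conjCLE.hasFDerivAt (x := z)).const_smul k)).const_smul (I / 2)
    refine hsum.congr_of_eventuallyEq (.of_forall fun w => ?_)
    simp
    ring
  have hek : HasFDerivAt (ek k) _ z := hphase.cexp
  rw [hek.fderiv]
  simp [ek, mul_add]

lemma norm_fderiv_ek_le (k z : ℂ) : ‖fderiv ℝ (ek k) z‖ ≤ ‖k‖ := by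
  refine ContinuousLinearMap.opNorm_le_bound _ (norm_nonneg _) fun v => ?_
  calc ‖fderiv ℝ (ek k) z v‖ = ‖conj k * v + k * conj v‖ / 2 := by
        rw [fderiv_ek_apply, norm_mul, norm_ek, norm_mul, norm_div, norm_I, norm_ofNat]
        ring
    _ ≤ (‖conj k * v‖ + ‖k * conj v‖) / 2 := by
        gcongr
        exact norm_add_le _ _
    _ = ‖k‖ * ‖v‖ := by
        simp

lemma enorm_fderiv_ek_mul_le (k : ℂ) (hG : DifferentiableAt ℝ G z) :
    ‖fderiv ℝ (fun z => ek k z * G z) z‖ₑ ≤ ‖fderiv ℝ G z‖ₑ + ‖k‖ₑ * ‖G z‖ₑ := by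
  rw [fderiv_fun_mul ((contDiff_ek k).differentiable one_ne_zero z) hG]
  refine (enorm_add_le _ _).trans ?_
  rw [enorm_smul, enorm_smul, mul_comm ‖G z‖ₑ]
  gcongr
  · rw [← ofReal_norm, norm_ek, ENNReal.ofReal_one, one_mul]
  · exact enorm_le_iff_norm_le.2 (norm_fderiv_ek_le k z)

lemma dbar_ek_mul (k : ℂ) (hG : DifferentiableAt ℝ G z) :
    dbar (fun z => ek k z * G z) z = I * k / 2 * (ek k z * G z) + ek k z * dbar G z := by
  rw [dbar, fderiv_fun_mul ((contDiff_ek k).differentiable one_ne_zero z) hG, dbar]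
  simp only [add_apply, smul_apply, fderiv_ek_apply, smul_eq_mul, map_one, conj_I]
  linear_combination (ek k z * G z * (I / 4) * (conj k - k)) * I_mul_I

lemma continuous_dbar (hG : ContDiff ℝ 1 G) : Continuous (dbar G) := by
  unfold dbar
  fun_prop

lemma enorm_dbar_le (G : ℂ → ℂ) (z : ℂ) : ‖dbar G z‖ₑ ≤ ‖fderiv ℝ G z‖ₑ := by
  have hone : ‖fderiv ℝ G z 1‖ ≤ ‖fderiv ℝ G z‖ :=
    ContinuousLinearMap.unit_le_opNorm _ _ (by simp)
  have hI : ‖fderiv ℝ G z I‖ ≤ ‖fderiv ℝ G z‖ :=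
    ContinuousLinearMap.unit_le_opNorm _ _ (by simp)
  rw [enorm_le_iff_norm_le, dbar, norm_div, norm_ofNat, div_le_iff₀ two_pos]
  refine (norm_add_le _ _).trans ?_
  rw [norm_mul, norm_I, one_mul]
  linarith

lemma rieszPotential_fderiv_ek_mul_ne_top (k : ℂ) (hG : ContDiff ℝ 1 G)
    (hint : rieszPotential volume 1 (‖G ·‖ₑ) z ≠ ⊤)
    (hint' : rieszPotential volume 1 (‖fderiv ℝ G ·‖ₑ) z ≠ ⊤) :
    rieszPotential volume 1 (‖fderiv ℝ (fun w => ek k w * G w) ·‖ₑ) z ≠ ⊤ := by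
  have hfderiv : Continuous (fderiv ℝ G) := hG.continuous_fderiv one_ne_zero
  rw [rieszPotential_one_eq_lintegral] at hint hint' ⊢
  refine ne_top_of_le_ne_top
    (ENNReal.add_ne_top.2 ⟨hint', ENNReal.mul_ne_top (enorm_ne_top (x := k)) hint⟩) ?_
  rw [← lintegral_const_mul' _ _ enorm_ne_top, ← lintegral_add_left (by fun_prop)]
  refine lintegral_mono fun w => ?_
  rw [← mul_assoc, ← add_mul]
  gcongr
  exact enorm_fderiv_ek_mul_le k (hG.differentiable one_ne_zero w)

lemma mul_dbarInv_ek_mul (k : ℂ) (hG : ContDiff ℝ 1 G)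
    (hint : rieszPotential volume 1 (‖G ·‖ₑ) z ≠ ⊤)
    (hint' : rieszPotential volume 1 (‖fderiv ℝ G ·‖ₑ) z ≠ ⊤) :
    I * k / 2 * dbarInv (fun w => ek k w * G w) z =
      ek k z * G z - dbarInv (fun w => ek k w * dbar G w) z := by
  have hGd : Differentiable ℝ G := hG.differentiable one_ne_zero
  have hpompeiu : dbarInv (dbar fun w => ek k w * G w) z = ek k z * G z :=
    dbarInv_dbar (F := fun w => ek k w * G w) ((contDiff_ek k).mul hG)
      (by simpa only [enorm_ek_mul]) (rieszPotential_fderiv_ek_mul_ne_top k hG hint hint')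
  have hG_meas : Measurable fun w => ek k w * G w :=
    ((contDiff_ek k).continuous.mul hG.continuous).measurable
  have hdbar_meas : Measurable fun w => ek k w * dbar G w :=
    ((contDiff_ek k).continuous.mul (continuous_dbar hG)).measurable
  have hG_int : Integrable fun w => ek k w * G w / (z - w) :=
    (integrable_div_sub_iff hG_meas z).2 (by simpa only [enorm_ek_mul])
  have hdbar_int : Integrable fun w => ek k w * dbar G w / (z - w) := by
    refine (integrable_div_sub_iff hdbar_meas z).2 (ne_top_of_le_ne_top hint' ?_)
    exact lintegral_mono fun w => by gcongr; exact (enorm_ek_mul k w _).trans_le (enorm_dbar_le G w)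
  rw [eq_sub_iff_add_eq, ← hpompeiu]
  simp only [dbarInv, dbar_ek_mul k (hGd _), add_div, mul_div_assoc (I * k / 2)]
  rw [integral_add (hG_int.const_mul _) hdbar_int, integral_const_mul]
  ring

lemma enorm_dbarInv_ek_mul_le {k : ℂ} (hk : k ≠ 0) (hG : ContDiff ℝ 1 G)
    (hint : rieszPotential volume 1 (‖G ·‖ₑ) z ≠ ⊤) :
    ‖dbarInv (fun w => ek k w * G w) z‖ₑ ≤
      ENNReal.ofReal (4 / Real.pi * ‖k‖⁻¹) * rieszPotential volume 1 (‖fderiv ℝ G ·‖ₑ) z := by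
  set R := rieszPotential volume 1 (‖fderiv ℝ G ·‖ₑ) z
  rcases eq_or_ne R ⊤ with hR | hR
  · have hcoef : 0 < 4 / Real.pi * ‖k‖⁻¹ := by positivity
    simp [hR, ENNReal.mul_top (ENNReal.ofReal_pos.2 hcoef).ne']
  have hG_le : ‖G z‖ₑ ≤ ENNReal.ofReal Real.pi⁻¹ * R := by
    rw [← dbarInv_dbar hG hint hR]
    exact enorm_dbarInv_le (enorm_dbar_le G) z
  have hdbar_le : ‖dbarInv (fun w => ek k w * dbar G w) z‖ₑ ≤ ENNReal.ofReal Real.pi⁻¹ * R :=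
    enorm_dbarInv_le (fun w => (enorm_ek_mul k w _).trans_le (enorm_dbar_le G w)) z
  have hcoef : ‖(I * k / 2)⁻¹‖ₑ = ENNReal.ofReal (2 * ‖k‖⁻¹) := by
    rw [← ofReal_norm]
    congr 1
    simp [div_eq_mul_inv]
  have hIk : I * k / 2 ≠ 0 := by simp [hk]
  rw [eq_inv_mul_iff_mul_eq₀ hIk |>.2 (mul_dbarInv_ek_mul k hG hint hR), enorm_mul, hcoef]
  calc ENNReal.ofReal (2 * ‖k‖⁻¹) * ‖ek k z * G z - dbarInv (fun w => ek k w * dbar G w) z‖ₑ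
      ≤ ENNReal.ofReal (2 * ‖k‖⁻¹) *
          (ENNReal.ofReal Real.pi⁻¹ * R + ENNReal.ofReal Real.pi⁻¹ * R) := by
        gcongr
        exact enorm_sub_le.trans (add_le_add ((enorm_ek_mul k z _).trans_le hG_le) hdbar_le)
    _ = ENNReal.ofReal (4 / Real.pi * ‖k‖⁻¹) * R := by
        rw [← add_mul, ← mul_assoc, ← ENNReal.ofReal_add (by positivity) (by positivity),
          ← ENNReal.ofReal_mul (by positivity)]
        congr 2
        ring

end PlaneWave

lemma integrable_schwartzMap_div_sub (G : 𝓢(ℂ, ℂ)) (z : ℂ) :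
    Integrable fun w => G w / (z - w) :=
  integrable_div_sub_of_norm_le G.continuous.measurable (G.norm_le_seminorm ℝ) G.integrable z

theorem stmt4_general (p : ℝ) (hp2 : 2 < p) :
    ∃ C : ℝ, 0 < C ∧ ∀ G : ℂ → ℂ, ContDiff ℝ 1 G → (∀ z, Integrable fun w => G w / (z - w)) →
      ∀ k : ℂ, k ≠ 0 → eLpNorm (dbarInv fun z => ek (-k) z * G z) (ENNReal.ofReal p) volume ≤
        ENNReal.ofReal (C * ‖k‖⁻¹) *
          eLpNorm (fun z => fderiv ℝ G z) (ENNReal.ofReal (2 * p / (p + 2))) volume := by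
  have hq : 1 < 2 * p / (p + 2) := by
    rw [one_lt_div (by linarith)]
    linarith
  have hpq : p⁻¹ = (2 * p / (p + 2))⁻¹ - 1 / Module.finrank ℝ ℂ := by
    rw [finrank_real_complex]
    field_simp
    ring
  obtain ⟨C, hC, hHLS⟩ :=
    exists_eLpNorm_rieszPotential_le (volume : Measure ℂ) one_pos (by linarith) hq hpq
  refine ⟨4 / Real.pi * C, by positivity, fun G hG hint k hk => ?_⟩
  have hpt (z : ℂ) : ‖dbarInv (fun z => ek (-k) z * G z) z‖ₑ ≤
      ENNReal.ofReal (4 / Real.pi * ‖k‖⁻¹) * rieszPotential volume 1 (‖fderiv ℝ G ·‖ₑ) z := by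
    simpa only [norm_neg] using enorm_dbarInv_ek_mul_le (neg_ne_zero.2 hk) hG
      ((integrable_div_sub_iff hG.continuous.measurable z).1 (hint z))
  have hgrad : Measurable (‖fderiv ℝ G ·‖ₑ) :=
    (hG.continuous_fderiv one_ne_zero).enorm.measurable
  refine (eLpNorm_le_mul_eLpNorm_of_ae_le_mul'' (g := rieszPotential volume 1 (‖fderiv ℝ G ·‖ₑ)) _
    (measurable_rieszPotential volume hgrad).aestronglyMeasurable (.of_forall hpt)).trans ?_
  refine (mul_le_mul_right (hHLS _ hgrad) _).trans_eq ?_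
  rw [eLpNorm_enorm, ← mul_assoc, ← ENNReal.ofReal_coe_nnreal,
    ← ENNReal.ofReal_mul (by positivity), mul_right_comm]

/-- Estimate \eqref{per}: `‖∂̄⁻¹[e_{-k} G]‖_p ≤ C |k|⁻¹ ‖∇G‖_{2p/(p+2)}`. -/
theorem stmt4 (p : ℝ) (hp2 : 2 < p) :
    ∃ C : ℝ, 0 < C ∧ ∀ (G : 𝓢(ℂ, ℂ)) (k : ℂ), k ≠ 0 →
      eLpNorm (dbarInv fun z => ek (-k) z * G z) (ENNReal.ofReal p) volume ≤
        ENNReal.ofReal (C * ‖k‖⁻¹) *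
          eLpNorm (fun z => fderiv ℝ (⇑G) z) (ENNReal.ofReal (2 * p / (p + 2))) volume := by
  obtain ⟨C, hC, h⟩ := stmt4_general p hp2
  exact ⟨C, hC, fun G => h G (G.smooth 1) (integrable_schwartzMap_div_sub G)⟩
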